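/- In the setting of a feedforward network f with weights (W_i, b_i) and transformed weights (W'_i, b'_i) obtained from elements A_i ∈ G_{σ_{n_i}} as above, fix a layer 1 ≤ l ≤ k−1 and let f̃_{>l} denote the composition of layers l+1,…,k using the transformed weights. Then the stitched network f̃_{>l} ∘ φ_σ(A_l) ∘ f_{≤l} equals f as a function ℝ^{n_0} → ℝ^{n_k}; likewise f_{>l} ∘ φ_σ(A_l)^{−1} ∘ f̃_{≤l} equals f, where f̃_{≤l} is the composition of layers 1,…,l using the transformed weights. -/

import Mathlib

open Matrix

noncomputable section

/-- Coordinatewise application of `σ : ℝ → ℝ` to vectors in `ℝ^n`. -/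
def actCoord (σ : ℝ → ℝ) (n : ℕ) (x : Fin n → ℝ) : Fin n → ℝ := fun i => σ (x i)

/-- The intertwiner group `G_{σ_n}` of the nonlinearity `σ_n`. -/
def Intertwiner (σ : ℝ → ℝ) (n : ℕ) : Set (Matrix (Fin n) (Fin n) ℝ) :=
  {A | IsUnit A ∧ ∃ B : Matrix (Fin n) (Fin n) ℝ, IsUnit B ∧
    ∀ x : Fin n → ℝ, actCoord σ n (A.mulVec x) = B.mulVec (actCoord σ n x)}

/-- `φ_σ(A) = σ(A) · σ(I_n)⁻¹`, where `σ` is applied entrywise. -/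
def phiMap (σ : ℝ → ℝ) (n : ℕ) (A : Matrix (Fin n) (Fin n) ℝ) :
    Matrix (Fin n) (Fin n) ℝ :=
  A.map σ * ((1 : Matrix (Fin n) (Fin n) ℝ).map σ)⁻¹

/-- `fwdHidden σ n W b m = f_{≤ m}`: the composition of the first `m` activated layers. -/
def fwdHidden (σ : ℝ → ℝ) (n : ℕ → ℕ)
    (W : ∀ i : ℕ, Matrix (Fin (n (i + 1))) (Fin (n i)) ℝ)
    (b : ∀ i : ℕ, Fin (n (i + 1)) → ℝ) :
    ∀ m : ℕ, (Fin (n 0) → ℝ) → (Fin (n m) → ℝ)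
  | 0 => id
  | (m + 1) => fun x => fun i => σ (((W m).mulVec (fwdHidden σ n W b m x) + b m) i)

/-- `seg σ n W b m j`: the composition of the `j` activated layers `ℓ_{m+j} ∘ ⋯ ∘ ℓ_{m+1}`,
taking inputs at layer `m`. -/
def seg (σ : ℝ → ℝ) (n : ℕ → ℕ)
    (W : ∀ i : ℕ, Matrix (Fin (n (i + 1))) (Fin (n i)) ℝ)
    (b : ∀ i : ℕ, Fin (n (i + 1)) → ℝ) (m : ℕ) :
    ∀ j : ℕ, (Fin (n m) → ℝ) → (Fin (n (m + j)) → ℝ)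
  | 0 => id
  | (j + 1) => fun x => fun i =>
      σ (((W (m + j)).mulVec (seg σ n W b m j x) + b (m + j)) i)

theorem phiMap_spec {σ : ℝ → ℝ} {n : ℕ} {A : Matrix (Fin n) (Fin n) ℝ}
    (hI : IsUnit ((1 : Matrix (Fin n) (Fin n) ℝ).map σ)) (hA : A ∈ Intertwiner σ n) :
    IsUnit (phiMap σ n A) ∧
    ∀ x : Fin n → ℝ, actCoord σ n (A.mulVec x) = (phiMap σ n A).mulVec (actCoord σ n x) := by
  obtain ⟨_, B, hB, h⟩ := hA
  have h1 : A.map σ = B * (1 : Matrix (Fin n) (Fin n) ℝ).map σ := by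
    ext i j
    have := congrFun (h ((1 : Matrix (Fin n) (Fin n) ℝ).col j)) i
    have e : A.mulVec ((1 : Matrix (Fin n) (Fin n) ℝ).col j) i = A i j := by
      have : (A * (1 : Matrix (Fin n) (Fin n) ℝ) : Matrix (Fin n) (Fin n) ℝ) i j = A i j := by rw [Matrix.mul_one]
      rw [← this]; rfl
    unfold actCoord at this
    rw [e] at this
    exact this
  have h2 : phiMap σ n A = B := by
    unfold phiMap
    rw [h1, Matrix.mul_nonsing_inv_cancel_right _ _ ((Matrix.isUnit_iff_isUnit_det _).1 hI)]
  rw [h2]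
  exact ⟨hB, h⟩

theorem seg_fwd (σ : ℝ → ℝ) (n : ℕ → ℕ)
    (W : ∀ i : ℕ, Matrix (Fin (n (i + 1))) (Fin (n i)) ℝ)
    (b : ∀ i : ℕ, Fin (n (i + 1)) → ℝ) (m j : ℕ) (x : Fin (n 0) → ℝ) :
    seg σ n W b m j (fwdHidden σ n W b m x) = fwdHidden σ n W b (m + j) x := by
  induction j with
  | zero => rfl
  | succ j ih =>
    change (fun i => σ (((W (m + j)).mulVec (seg σ n W b m j _) + b (m + j)) i)) =
      (fun i => σ (((W (m + j)).mulVec (fwdHidden σ n W b (m + j) x) + b (m + j)) i))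
    rw [ih]

/-- Stitching with intertwiner groups.  With depth `k = m + r + 1`, stitching layer index
`l = m` (so `1 ≤ l ≤ k - 1`), original weights `(W, b)`, and transformed weights `(W', b')`
obtained from `A_i ∈ G_{σ_{n_i}}` as in the weight-space symmetry, the stitched networks
`f̃_{>l} ∘ φ_σ(A_l) ∘ f_{≤l}` and `f_{>l} ∘ φ_σ(A_l)⁻¹ ∘ f̃_{≤l}` both equal `f`,
where `f(x) = W_{k}·f_{≤ k-1}(x) + b_{k}` is the original network. -/
theorem intertwiner_stitching (σ : ℝ → ℝ) (n : ℕ → ℕ) (hn : ∀ i, 0 < n i)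
    (m r : ℕ) (hm : 1 ≤ m)
    (hσI : ∀ i : ℕ, 1 ≤ i → i ≤ m + r →
      IsUnit ((1 : Matrix (Fin (n i)) (Fin (n i)) ℝ).map σ))
    (W : ∀ i : ℕ, Matrix (Fin (n (i + 1))) (Fin (n i)) ℝ)
    (b : ∀ i : ℕ, Fin (n (i + 1)) → ℝ)
    (A : ∀ i : ℕ, Matrix (Fin (n i)) (Fin (n i)) ℝ)
    (hA : ∀ i : ℕ, 1 ≤ i → i ≤ m + r → A i ∈ Intertwiner σ (n i))
    (hAtop : A (m + r + 1) = 1)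
    (W' : ∀ i : ℕ, Matrix (Fin (n (i + 1))) (Fin (n i)) ℝ)
    (b' : ∀ i : ℕ, Fin (n (i + 1)) → ℝ)
    (hW'0 : W' 0 = A 1 * W 0)
    (hW' : ∀ i : ℕ, 1 ≤ i → i ≤ m + r →
      W' i = A (i + 1) * W i * (phiMap σ (n i) (A i))⁻¹)
    (hb' : ∀ i : ℕ, i ≤ m + r → b' i = (A (i + 1)).mulVec (b i)) :
    (∀ x : Fin (n 0) → ℝ,
      (W' (m + r)).mulVec
          (seg σ n W' b' m r
            ((phiMap σ (n m) (A m)).mulVec (fwdHidden σ n W b m x))) + b' (m + r) =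
        (W (m + r)).mulVec (fwdHidden σ n W b (m + r) x) + b (m + r)) ∧
    (∀ x : Fin (n 0) → ℝ,
      (W (m + r)).mulVec
          (seg σ n W b m r
            ((phiMap σ (n m) (A m))⁻¹.mulVec (fwdHidden σ n W' b' m x))) + b (m + r) =
        (W (m + r)).mulVec (fwdHidden σ n W b (m + r) x) + b (m + r)) := by
  have hinv : ∀ i, 1 ≤ i → i ≤ m + r → ∀ y : Fin (n i) → ℝ,
      (phiMap σ (n i) (A i))⁻¹.mulVec ((phiMap σ (n i) (A i)).mulVec y) = y := by
    intro i h1 h2 y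
    rw [Matrix.mulVec_mulVec, Matrix.nonsing_inv_mul _
      ((Matrix.isUnit_iff_isUnit_det _).1 (phiMap_spec (hσI i h1 h2) (hA i h1 h2)).1),
      Matrix.one_mulVec]
  have step : ∀ i, 1 ≤ i → i ≤ m + r → ∀ y : Fin (n i) → ℝ,
      (W' i).mulVec ((phiMap σ (n i) (A i)).mulVec y) + b' i =
        (A (i + 1)).mulVec ((W i).mulVec y + b i) := by
    intro i h1 h2 y
    rw [hW' i h1 h2, hb' i h2, ← Matrix.mulVec_mulVec, hinv i h1 h2, Matrix.mulVec_add,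
      Matrix.mulVec_mulVec]
  have hfwd : ∀ j, j + 1 ≤ m + r → ∀ x, fwdHidden σ n W' b' (j + 1) x =
      (phiMap σ (n (j + 1)) (A (j + 1))).mulVec (fwdHidden σ n W b (j + 1) x) := by
    intro j
    induction j with
    | zero =>
      intro h x
      refine Eq.trans ?_ ((phiMap_spec (hσI 1 le_rfl h) (hA 1 le_rfl h)).2 ((W 0).mulVec x + b 0))
      change actCoord σ (n 1) ((W' 0).mulVec x + b' 0) = _
      rw [hW'0, hb' 0 (by omega), Matrix.mulVec_add, Matrix.mulVec_mulVec]
    | succ j ih =>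
      intro h x
      refine Eq.trans ?_ ((phiMap_spec (hσI (j + 1 + 1) (by omega) h) (hA _ (by omega) h)).2
        ((W (j + 1)).mulVec (fwdHidden σ n W b (j + 1) x) + b (j + 1)))
      change actCoord σ (n (j + 1 + 1))
        ((W' (j + 1)).mulVec (fwdHidden σ n W' b' (j + 1) x) + b' (j + 1)) = _
      rw [ih (by omega), step (j + 1) (by omega) (by omega)]
  have hseg : ∀ j, j ≤ r → ∀ y, seg σ n W' b' m j ((phiMap σ (n m) (A m)).mulVec y) =
      (phiMap σ (n (m + j)) (A (m + j))).mulVec (seg σ n W b m j y) := by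
    intro j
    induction j with
    | zero => intro _ y; rfl
    | succ j ih =>
      intro h y
      refine Eq.trans ?_ ((phiMap_spec (hσI (m + j + 1) (by omega) (by omega))
        (hA _ (by omega) (by omega))).2 ((W (m + j)).mulVec (seg σ n W b m j y) + b (m + j)))
      change actCoord σ (n (m + j + 1))
        ((W' (m + j)).mulVec (seg σ n W' b' m j _) + b' (m + j)) = _
      rw [ih (by omega), step (m + j) (by omega) (by omega)]
  refine ⟨fun x => ?_, fun x => ?_⟩
  · rw [hseg r le_rfl, step (m + r) (by omega) le_rfl, hAtop, Matrix.one_mulVec, seg_fwd]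
  · have : fwdHidden σ n W' b' m x = (phiMap σ (n m) (A m)).mulVec (fwdHidden σ n W b m x) := by
      cases m with
      | zero => omega
      | succ m => exact hfwd m (by omega) x
    rw [this, hinv m hm (by omega), seg_fwd]
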